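/- arXiv:1005.5716 — 2 statements merged into one kernel-verified Lean document; each statement's English description precedes it below -/
import Mathlib

section
/- For every ε ∈ (0, 1/16) there exists a constant C₀ such that the following holds. If p = C n^{-1/2} for some constant C ≥ C₀, then G(n,p) asymptotically almost surely satisfies: every subgraph G' of G(n,p) with more than (1/2 + ε)·n²p/2 edges contains a vertex w such that the number of edges of G' spanned by the second neighborhood N^{(2)}_{G'}(w) is at least (ε/16)·n²p. -/
/-!
Let `G'` have average degree slightly above `pn/2`. By Cauchy–Schwarz its number of walks of length
two is so large that, on average, a vertex `y` of degree `d` starts more than `(pn - d) d + ξ` of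
them, with `ξ` of order `ε (pn)²`; the surplus over `(pn - d) d` is the *excess* of `y`. Since no
excess is larger than `O(pn d)`, the vertices of excess at least `ξ` carry a constant fraction of
all degrees, so some vertex `w` is adjacent to `Ω(ε pn)` of them. By pigeonhole `Ω(ε δ pn)` of these
neighbors, forming a set `Y`, have degrees in a common window `[D, D + 2δpn]`.

Let `S` be the joint neighborhood of `Y`. The host graph sends hardly more than `p |Y| |A|` edges
from `Y` to any set `A`. This gives `|S| ≳ D / p`, and it shows that the walks of length two from
`Y` which leave `S` number at most about `p (n - |S|) ∑_{y ∈ Y} d(y) ≲ (pn - D) ∑_{y ∈ Y} d(y)`. The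
excess therefore consists of walks ending in `S`, and as each vertex of `S` has about `p |Y|`
neighbors in `Y` at most, `S` contains `ξ / p` ordered adjacent pairs up to small errors. All of `S`
except `w` and its `O(pn)` neighbors is at distance two from `w`, and the exceptions meet only
`O(p² n²) = o(pn²)` edges.

The edge bound for the host graph is a Chernoff estimate with a union bound over the `4 ^ n` pairs
`(Y, A)`: as `|Y|` has order `pn`, the exponent has order `(pn)² = C² n`, which wins for large `C`.
Being one-sided, the bound passes to the subgraph `G'`.
-/

open Filter Topology Classical

/-- Probability that a graph drawn from the binomial random graph G(n,p) (each pair of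
vertices forming an edge independently with probability p) satisfies the predicate P. -/
noncomputable def gnpProb (V : Type) [Fintype V] [DecidableEq V] (p : ℝ)
    (P : SimpleGraph V → Prop) : ℝ :=
  ∑ G : SimpleGraph V,
    if P G then p ^ G.edgeSet.ncard *
      (1 - p) ^ ((Fintype.card V).choose 2 - G.edgeSet.ncard) else 0

/-- The neighborhood of a vertex set: all vertices adjacent to at least one vertex of X. -/
def setNbhd {V : Type} (G : SimpleGraph V) (X : Finset V) : Set V :=
  {u | ∃ v ∈ X, G.Adj v u}

/-- The total degree of a vertex set. -/
noncomputable def totalDeg {V : Type} (G : SimpleGraph V) (X : Finset V) : ℝ :=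
  ∑ v ∈ X, ((G.neighborSet v).ncard : ℝ)

/-- The set of vertices at distance exactly 2 from `w` in `G`. -/
def secondNbhd {V : Type} (G : SimpleGraph V) (w : V) : Set V :=
  {u | G.dist w u = 2}

/-- The number of edges of `G` spanned by the vertex set `S`. -/
noncomputable def edgesInside {V : Type} (G : SimpleGraph V) (S : Set V) : ℕ :=
  {e ∈ G.edgeSet | ∀ v ∈ e, v ∈ S}.ncard

open Finset

/-! ### The binomial model -/

section Binomial

variable {V : Type} [Fintype V] {p : ℝ}

/-- The probability that the binomial random graph with edge probability `p` equals `G`. -/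
noncomputable def gnpWeight (p : ℝ) (G : SimpleGraph V) : ℝ :=
  p ^ G.edgeSet.ncard * (1 - p) ^ ((Fintype.card V).choose 2 - G.edgeSet.ncard)

lemma gnpWeight_nonneg (h0 : 0 ≤ p) (h1 : p ≤ 1) (G : SimpleGraph V) : 0 ≤ gnpWeight p G :=
  mul_nonneg (pow_nonneg h0 _) (pow_nonneg (sub_nonneg.2 h1) _)

variable [DecidableEq V]

lemma sum_gnpWeight_mul_prod_edgeFinset (p : ℝ) (f : Sym2 V → ℝ) :
    ∑ G : SimpleGraph V, gnpWeight p G * ∏ e ∈ G.edgeFinset, f e =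
      ∏ e ∈ (⊤ : SimpleGraph V).edgeFinset, (p * f e + (1 - p)) := by
  rw [prod_add]
  refine sum_bij' (fun G _ => G.edgeFinset)
    (fun t _ => SimpleGraph.fromEdgeSet (t : Set (Sym2 V)))
    (fun G _ => mem_powerset.2 (SimpleGraph.edgeFinset_mono le_top)) (fun _ _ => mem_univ _)
    (by simp) ?_ ?_
  · intro t ht
    ext e
    simp only [SimpleGraph.mem_edgeFinset, SimpleGraph.edgeSet_fromEdgeSet, Set.mem_sdiff,
      mem_coe, and_iff_left_iff_imp]
    intro he
    simpa using mem_powerset.1 ht he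
  · intro G _
    rw [prod_mul_distrib, prod_const, prod_const,
      card_sdiff_of_subset (SimpleGraph.edgeFinset_mono le_top),
      SimpleGraph.card_edgeFinset_top_eq_card_choose_two, gnpWeight, Set.ncard_eq_toFinset_card']
    simp only [SimpleGraph.edgeFinset]
    ring

lemma sum_gnpWeight (p : ℝ) : ∑ G : SimpleGraph V, gnpWeight p G = 1 := by
  simpa using sum_gnpWeight_mul_prod_edgeFinset (V := V) p fun _ => 1

lemma gnpProb_eq_sum_filter (p : ℝ) (P : SimpleGraph V → Prop) :
    gnpProb V p P = ∑ G with P G, gnpWeight p G :=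
  (sum_filter _ _).symm

lemma gnpProb_add_gnpProb_not (p : ℝ) (P : SimpleGraph V → Prop) :
    gnpProb V p P + gnpProb V p (fun G => ¬ P G) = 1 := by
  rw [gnpProb_eq_sum_filter, gnpProb_eq_sum_filter, sum_filter_add_sum_filter_not, sum_gnpWeight]

lemma gnpProb_nonneg (h0 : 0 ≤ p) (h1 : p ≤ 1) (P : SimpleGraph V → Prop) :
    0 ≤ gnpProb V p P := by
  rw [gnpProb_eq_sum_filter]
  exact sum_nonneg fun G _ => gnpWeight_nonneg h0 h1 G

lemma gnpProb_le_one (h0 : 0 ≤ p) (h1 : p ≤ 1) (P : SimpleGraph V → Prop) :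
    gnpProb V p P ≤ 1 := by
  rw [← gnpProb_add_gnpProb_not p P]
  exact le_add_of_nonneg_right (gnpProb_nonneg h0 h1 _)

lemma gnpProb_mono (h0 : 0 ≤ p) (h1 : p ≤ 1) {P Q : SimpleGraph V → Prop}
    (h : ∀ G, P G → Q G) : gnpProb V p P ≤ gnpProb V p Q := by
  rw [gnpProb_eq_sum_filter, gnpProb_eq_sum_filter]
  exact sum_le_sum_of_subset_of_nonneg (monotone_filter_right _ fun G _ => h G)
    fun G _ _ => gnpWeight_nonneg h0 h1 G

lemma gnpProb_or_le (h0 : 0 ≤ p) (h1 : p ≤ 1) (P Q : SimpleGraph V → Prop) :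
    gnpProb V p (fun G => P G ∨ Q G) ≤ gnpProb V p P + gnpProb V p Q := by
  simp only [gnpProb, ← sum_add_distrib]
  refine sum_le_sum fun G _ => ?_
  have hG := gnpWeight_nonneg h0 h1 G
  rw [gnpWeight] at hG
  split_ifs <;> first | tauto | linarith

lemma gnpProb_exists_mem_le (h0 : 0 ≤ p) (h1 : p ≤ 1) {ι : Type*} (s : Finset ι)
    (P : ι → SimpleGraph V → Prop) :
    gnpProb V p (fun G => ∃ i ∈ s, P i G) ≤ ∑ i ∈ s, gnpProb V p (P i) := by
  induction s using Finset.induction_on with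
  | empty => simp [gnpProb]
  | insert i s hi ih =>
    simp only [exists_mem_insert]
    rw [sum_insert hi]
    exact (gnpProb_or_le h0 h1 _ _).trans (by gcongr)

lemma gnpProb_le_sum_gnpWeight_mul (h0 : 0 ≤ p) (h1 : p ≤ 1) {P : SimpleGraph V → Prop}
    {X : SimpleGraph V → ℝ} (hX : ∀ G, 0 ≤ X G) (hPX : ∀ G, P G → 1 ≤ X G) :
    gnpProb V p P ≤ ∑ G, gnpWeight p G * X G := by
  rw [gnpProb_eq_sum_filter]
  calc ∑ G with P G, gnpWeight p G ≤ ∑ G with P G, gnpWeight p G * X G :=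
        sum_le_sum fun G hG =>
          le_mul_of_one_le_right (gnpWeight_nonneg h0 h1 G) (hPX G (mem_filter.1 hG).2)
    _ ≤ ∑ G, gnpWeight p G * X G :=
        sum_le_sum_of_subset_of_nonneg (filter_subset _ _)
          fun G _ _ => mul_nonneg (gnpWeight_nonneg h0 h1 G) (hX G)

lemma mul_exp_add_one_sub_le_exp {x : ℝ} (h0 : 0 ≤ p) (hx : |x| ≤ 1) :
    p * Real.exp x + (1 - p) ≤ Real.exp (p * (x + x ^ 2)) := by
  have hexp : Real.exp x - 1 ≤ x + x ^ 2 := by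
    linarith [(abs_le.1 (Real.abs_exp_sub_one_sub_id_le hx)).2]
  linarith [mul_le_mul_of_nonneg_left hexp h0, Real.add_one_le_exp (p * (x + x ^ 2))]

lemma sum_gnpWeight_mul_exp_le (h0 : 0 ≤ p) (h1 : p ≤ 1) {c : Sym2 V → ℝ} (hc : ∀ e, |c e| ≤ 1) :
    ∑ G : SimpleGraph V, gnpWeight p G * Real.exp (∑ e ∈ G.edgeFinset, c e) ≤
      Real.exp (∑ e ∈ (⊤ : SimpleGraph V).edgeFinset, p * (c e + c e ^ 2)) := by
  simp only [Real.exp_sum, sum_gnpWeight_mul_prod_edgeFinset]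
  exact prod_le_prod
    (fun e _ => add_nonneg (mul_nonneg h0 (Real.exp_pos _).le) (sub_nonneg.2 h1))
    fun e _ => mul_exp_add_one_sub_le_exp h0 (hc e)

lemma gnpProb_sum_edgeFinset_gt_le {θ : ℝ} (h0 : 0 ≤ p) (h1 : p ≤ 1) (hθ : 0 ≤ θ)
    {c : Sym2 V → ℝ} (hc : ∀ e, |θ * c e| ≤ 1) (t : ℝ) :
    gnpProb V p (fun G => p * ∑ e ∈ (⊤ : SimpleGraph V).edgeFinset, c e + t <
        ∑ e ∈ G.edgeFinset, c e) ≤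
      Real.exp (p * θ ^ 2 * ∑ e ∈ (⊤ : SimpleGraph V).edgeFinset, c e ^ 2 - θ * t) := by
  set μ : ℝ := p * ∑ e ∈ (⊤ : SimpleGraph V).edgeFinset, c e with hμ
  calc gnpProb V p (fun G => μ + t < ∑ e ∈ G.edgeFinset, c e)
      ≤ ∑ G : SimpleGraph V, gnpWeight p G *
          (Real.exp (∑ e ∈ G.edgeFinset, θ * c e) * Real.exp (-(θ * (μ + t)))) := by
        refine gnpProb_le_sum_gnpWeight_mul h0 h1 (fun G => by positivity) fun G hG => ?_
        rw [← Real.exp_add, ← mul_sum]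
        refine Real.one_le_exp ?_
        linarith [mul_le_mul_of_nonneg_left hG.le hθ]
    _ ≤ Real.exp (∑ e ∈ (⊤ : SimpleGraph V).edgeFinset, p * (θ * c e + (θ * c e) ^ 2)) *
          Real.exp (-(θ * (μ + t))) := by
        simp only [← mul_assoc, ← sum_mul]
        gcongr
        simpa only [mul_assoc] using sum_gnpWeight_mul_exp_le h0 h1 hc
    _ = _ := by
        rw [← Real.exp_add]
        simp only [mul_add, sum_add_distrib, mul_pow, ← mul_sum, hμ]
        congr 1
        ring

end Binomial

/-! ### Edges between vertex sets -/

lemma card_filter_sym2_mk_eq_le_two {α : Type*} (T : Finset (α × α)) (e : Sym2 α) :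
    #{q ∈ T | s(q.1, q.2) = e} ≤ 2 := by
  induction e with
  | _ a b =>
    have hsub : {q ∈ T | s(q.1, q.2) = s(a, b)} ⊆ {(a, b), (b, a)} := by
      intro q hq
      simpa [Prod.ext_iff] using (mem_filter.1 hq).2
    exact (card_le_card hsub).trans card_le_two

section UpperTail

variable {V : Type}

/-- The number of ordered pairs in `Y × A` representing the unordered pair `e`: the multiplicity
with which the edge `e` is counted in `#(G.interedges Y A)`. -/
noncomputable def pairMult (Y A : Finset V) (e : Sym2 V) : ℕ :=
  #{q ∈ Y ×ˢ A | s(q.1, q.2) = e}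

lemma pairMult_le_two (Y A : Finset V) (e : Sym2 V) : pairMult Y A e ≤ 2 :=
  card_filter_sym2_mk_eq_le_two _ e

lemma sum_pairMult_le (Y A : Finset V) (s : Finset (Sym2 V)) :
    ∑ e ∈ s, pairMult Y A e ≤ #Y * #A := by
  simp only [pairMult]
  rw [sum_card_fiberwise_eq_card_filter, ← card_product]
  exact card_filter_le _ _

variable [Fintype V]

lemma card_interedges_eq_sum_pairMult (G : SimpleGraph V) (Y A : Finset V) :
    #(G.interedges Y A) = ∑ e ∈ G.edgeFinset, pairMult Y A e := by
  rw [card_eq_sum_card_fiberwise (f := fun q => s(q.1, q.2)) (t := G.edgeFinset)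
    fun q hq => by simpa using (G.mem_interedges_iff.1 hq).2.2]
  refine sum_congr rfl fun e he => ?_
  rw [pairMult, SimpleGraph.interedges_def, filter_filter]
  congr 1
  ext q
  simp only [mem_filter]
  refine and_congr_right fun _ => and_iff_right_of_imp fun hq => ?_
  rwa [SimpleGraph.mem_edgeFinset, ← hq] at he

lemma gnpProb_card_interedges_gt_le [DecidableEq V] {p θ : ℝ} (h0 : 0 ≤ p) (h1 : p ≤ 1)
    (hθ0 : 0 ≤ θ) (hθ1 : θ ≤ 1 / 2) (Y A : Finset V) (t : ℝ) :
    gnpProb V p (fun G => p * (#Y * #A) + t < #(G.interedges Y A)) ≤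
      Real.exp (2 * p * θ ^ 2 * (#Y * #A) - θ * t) := by
  let c : Sym2 V → ℝ := fun e => pairMult Y A e
  have hc0 (e) : 0 ≤ c e := Nat.cast_nonneg _
  have hc2 (e) : c e ≤ 2 := Nat.cast_le_ofNat.2 (pairMult_le_two Y A e)
  have hθc (e) : |θ * c e| ≤ 1 := by
    rw [abs_of_nonneg (mul_nonneg hθ0 (hc0 e))]
    nlinarith [hc0 e, hc2 e]
  have hsum : ∑ e ∈ (⊤ : SimpleGraph V).edgeFinset, c e ≤ #Y * #A := by
    simp only [c]
    exact_mod_cast sum_pairMult_le Y A (⊤ : SimpleGraph V).edgeFinset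
  have hsum_sq : ∑ e ∈ (⊤ : SimpleGraph V).edgeFinset, c e ^ 2 ≤ 2 * (#Y * #A) :=
    calc ∑ e ∈ (⊤ : SimpleGraph V).edgeFinset, c e ^ 2
        ≤ ∑ e ∈ (⊤ : SimpleGraph V).edgeFinset, 2 * c e :=
          sum_le_sum fun e _ => by nlinarith [hc0 e, hc2 e]
      _ ≤ 2 * (#Y * #A) := by rw [← mul_sum]; gcongr
  calc gnpProb V p (fun G => p * (#Y * #A) + t < #(G.interedges Y A))
      ≤ gnpProb V p (fun G => p * ∑ e ∈ (⊤ : SimpleGraph V).edgeFinset, c e + t <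
          ∑ e ∈ G.edgeFinset, c e) := by
        refine gnpProb_mono h0 h1 fun G hG => ?_
        rw [card_interedges_eq_sum_pairMult, Nat.cast_sum] at hG
        exact lt_of_le_of_lt (by gcongr) hG
    _ ≤ Real.exp (p * θ ^ 2 * ∑ e ∈ (⊤ : SimpleGraph V).edgeFinset, c e ^ 2 - θ * t) :=
        gnpProb_sum_edgeFinset_gt_le h0 h1 hθ0 hθc t
    _ ≤ Real.exp (2 * p * θ ^ 2 * (#Y * #A) - θ * t) := by
        rw [Real.exp_le_exp]
        linarith [mul_le_mul_of_nonneg_left hsum_sq (by positivity : 0 ≤ p * θ ^ 2)]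

end UpperTail

section DegIn

variable {V : Type*}

/-- The number of neighbors of `x` in `A`. -/
noncomputable def degIn (G : SimpleGraph V) (A : Finset V) (x : V) : ℝ :=
  #{a ∈ A | G.Adj x a}

lemma degIn_nonneg (G : SimpleGraph V) (A : Finset V) (x : V) : 0 ≤ degIn G A x :=
  Nat.cast_nonneg _

lemma degIn_eq_sum (G : SimpleGraph V) (A : Finset V) (x : V) :
    degIn G A x = ∑ a ∈ A, if G.Adj x a then 1 else 0 := by
  rw [degIn, natCast_card_filter]

lemma card_interedges_eq_sum_degIn (G : SimpleGraph V) (Y A : Finset V) :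
    (#(G.interedges Y A) : ℝ) = ∑ y ∈ Y, degIn G A y := by
  simp only [SimpleGraph.interedges_def, natCast_card_filter, sum_product, degIn_eq_sum]

lemma card_interedges_comm (G : SimpleGraph V) (A B : Finset V) :
    #(G.interedges A B) = #(G.interedges B A) := by
  have := G.symm
  exact Rel.card_interedges_comm A B

variable [Fintype V]

lemma degIn_univ (G : SimpleGraph V) (x : V) : degIn G univ x = G.degree x := by
  rw [degIn, ← G.card_neighborFinset_eq_degree, G.neighborFinset_eq_filter]

lemma degIn_add_degIn_compl (G : SimpleGraph V) (A : Finset V) (x : V) :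
    degIn G A x + degIn G Aᶜ x = G.degree x := by
  rw [← degIn_univ, degIn_eq_sum, degIn_eq_sum, degIn_eq_sum, sum_add_sum_compl]

lemma degIn_le_degree (G : SimpleGraph V) (A : Finset V) (x : V) : degIn G A x ≤ G.degree x := by
  rw [← degIn_add_degIn_compl G A]
  exact le_add_of_nonneg_right (degIn_nonneg G _ x)

lemma sum_sum_neighborFinset (G : SimpleGraph V) (Y : Finset V) (f : V → ℝ) :
    ∑ y ∈ Y, ∑ x ∈ G.neighborFinset y, f x = ∑ x, degIn G Y x * f x := by
  simp only [G.neighborFinset_eq_filter, sum_filter, degIn_eq_sum, sum_mul, ite_mul, one_mul,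
    zero_mul]
  rw [sum_comm]
  simp only [G.adj_comm]

lemma exists_sum_le_card_mul_degIn [Nonempty V] (G : SimpleGraph V) (B : Finset V) :
    ∃ w, ∑ y ∈ B, (G.degree y : ℝ) ≤ Fintype.card V * degIn G B w := by
  obtain ⟨w, hw⟩ := exists_max_image univ (degIn G B) univ_nonempty
  refine ⟨w, ?_⟩
  calc ∑ y ∈ B, (G.degree y : ℝ) = ∑ x, degIn G B x := by
        simpa using sum_sum_neighborFinset G B 1
    _ ≤ Fintype.card V * degIn G B w := by
        simpa using sum_le_card_nsmul univ (degIn G B) _ hw.2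
end DegIn

/-! ### Vertices of large excess -/

section Excess

variable {V : Type*} [Fintype V] {G : SimpleGraph V} {p ε ξ : ℝ}

/-- The number of walks of length two starting at `y` beyond `(pn - d) * d`, where `d` is the degree
of `y`. If `N(y)` lies in a set of about `d / p` vertices and its `d` vertices send at most the
expected number of edges out of that set, then about `d * p * (n - d / p) = (pn - d) * d` of these
walks leave it. Hence the excess counts walks ending inside. -/
noncomputable def excess (G : SimpleGraph V) (p : ℝ) (y : V) : ℝ :=
  ∑ x ∈ G.neighborFinset y, (G.degree x : ℝ) - p * Fintype.card V * G.degree y + G.degree y ^ 2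

lemma sum_excess (G : SimpleGraph V) (p : ℝ) :
    ∑ y, excess G p y =
      2 * ∑ x, (G.degree x : ℝ) ^ 2 - p * Fintype.card V * ∑ x, (G.degree x : ℝ) := by
  simp only [excess, sum_add_distrib, sum_sub_distrib, ← mul_sum, sum_sum_neighborFinset,
    degIn_univ, ← sq]
  ring

lemma le_sum_excess (hp : 0 ≤ p) (hε : 0 ≤ ε)
    (hdeg : (1 / 2 + ε) * (p * Fintype.card V ^ 2) ≤ ∑ x, (G.degree x : ℝ)) :
    ε * p ^ 2 * Fintype.card V ^ 3 ≤ ∑ y, excess G p y := by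
  rw [sum_excess]
  set n : ℝ := (Fintype.card V : ℝ)
  set s : ℝ := ∑ x, (G.degree x : ℝ)
  set a : ℝ := (1 / 2 + ε) * (p * n) with ha_def
  have : 0 ≤ n := Nat.cast_nonneg _
  -- The tangent line at `a` replaces Cauchy–Schwarz and avoids dividing by `n`.
  have htangent : 2 * a * s - n * a ^ 2 ≤ ∑ x, (G.degree x : ℝ) ^ 2 := by
    have hsum : ∑ x, (2 * a * G.degree x - a ^ 2) ≤ ∑ x, (G.degree x : ℝ) ^ 2 :=
      sum_le_sum fun x _ => by linarith [sq_nonneg (G.degree x - a)]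
    simpa [sum_sub_distrib, ← mul_sum] using hsum
  have hs : (4 * a - p * n) * (a * n) ≤ (4 * a - p * n) * s := by
    have ha : 0 ≤ 4 * a - p * n := by
      rw [show 4 * a - p * n = (1 + 4 * ε) * (p * n) by rw [ha_def]; ring]
      positivity
    exact mul_le_mul_of_nonneg_left (by linear_combination hdeg) ha
  have hsq : 0 ≤ ε ^ 2 * p ^ 2 * n ^ 3 := by positivity
  rw [ha_def] at htangent hs
  linear_combination 2 * htangent + hs + 2 * hsq

variable (hdeg : ∀ x, (G.degree x : ℝ) ≤ 2 * p * Fintype.card V)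

include hdeg in
lemma excess_le (y : V) :
    excess G p y ≤ 3 * p * Fintype.card V * G.degree y := by
  have hwalks : ∑ x ∈ G.neighborFinset y, (G.degree x : ℝ) ≤
      G.degree y * (2 * p * Fintype.card V) := by
    simpa using sum_le_card_nsmul (G.neighborFinset y) (fun x => (G.degree x : ℝ)) _
      fun x _ => hdeg x
  rw [excess]
  linarith [mul_le_mul_of_nonneg_left (hdeg y) (Nat.cast_nonneg (α := ℝ) (G.degree y))]

include hdeg in
lemma le_sum_degree_filter_excess (hp : 0 < p) [Nonempty V] (hε : 0 ≤ ε)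
    (hexcess : ε * p ^ 2 * Fintype.card V ^ 3 ≤ ∑ y, excess G p y) :
    ε / 6 * p * Fintype.card V ^ 2 ≤
      ∑ y with ε / 2 * p ^ 2 * Fintype.card V ^ 2 ≤ excess G p y, (G.degree y : ℝ) := by
  set n : ℝ := (Fintype.card V : ℝ)
  have : 0 < n := Nat.cast_pos.2 Fintype.card_pos
  set ξ : ℝ := ε / 2 * p ^ 2 * n ^ 2 with hξ_def
  have hsmall : ∑ y with ¬ ξ ≤ excess G p y, excess G p y ≤ n * ξ := by
    calc ∑ y with ¬ ξ ≤ excess G p y, excess G p y ≤ ∑ y with ¬ ξ ≤ excess G p y, ξ :=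
          sum_le_sum fun _ hy => (not_le.1 (mem_filter.1 hy).2).le
      _ ≤ ∑ _y : V, ξ :=
          sum_le_sum_of_subset_of_nonneg (filter_subset _ _) fun _ _ _ => by positivity
      _ = n * ξ := by simp [n]
  have hlarge : ∑ y with ξ ≤ excess G p y, excess G p y ≤
      3 * p * n * ∑ y with ξ ≤ excess G p y, (G.degree y : ℝ) := by
    rw [mul_sum]
    exact sum_le_sum fun y _ => excess_le hdeg y
  rw [← sum_filter_add_sum_filter_not univ (fun y => ξ ≤ excess G p y)] at hexcess
  refine le_of_mul_le_mul_left ?_ (by positivity : 0 < 3 * p * n)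
  rw [hξ_def] at hsmall
  linarith
include hdeg in
lemma exists_le_degIn_filter_excess (hp : 0 < p) [Nonempty V] (hε : 0 ≤ ε)
    (hsum : (1 / 2 + ε) * (p * Fintype.card V ^ 2) ≤ ∑ x, (G.degree x : ℝ)) :
    ∃ w, ε / 6 * p * Fintype.card V ≤
      degIn G {y | ε / 2 * p ^ 2 * Fintype.card V ^ 2 ≤ excess G p y} w := by
  obtain ⟨w, hw⟩ :=
    exists_sum_le_card_mul_degIn G {y | ε / 2 * p ^ 2 * Fintype.card V ^ 2 ≤ excess G p y}
  refine ⟨w, le_of_mul_le_mul_left ?_ (Nat.cast_pos (α := ℝ).2 (Fintype.card_pos (α := V)))⟩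
  linarith [le_sum_degree_filter_excess hdeg hp hε (le_sum_excess hp.le hε hsum)]

end Excess

lemma exists_subset_forall_mem_Icc {ι : Type*} (s : Finset ι) (f : ι → ℝ) {ℓ : ℝ} (hℓ : 0 < ℓ)
    (m : ℕ) (hf : ∀ i ∈ s, f i ∈ Set.Icc 0 (m * ℓ)) :
    ∃ t ⊆ s, ∃ D, (#s : ℝ) / (m + 1) ≤ #t ∧ ∀ i ∈ t, f i ∈ Set.Icc D (D + ℓ) := by
  have hmaps : ∀ i ∈ s, ⌊f i / ℓ⌋₊ ∈ range (m + 1) := fun i hi =>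
    mem_range_succ_iff.2 (Nat.floor_le_of_le ((div_le_iff₀ hℓ).2 (hf i hi).2))
  obtain ⟨j, -, hj⟩ := exists_le_card_fiber_of_nsmul_le_card_of_maps_to (b := (#s : ℝ) / (m + 1))
    hmaps nonempty_range_add_one (by simp [field])
  refine ⟨{i ∈ s | ⌊f i / ℓ⌋₊ = j}, filter_subset _ _, j * ℓ, hj, fun i hi => ?_⟩
  obtain ⟨his, rfl⟩ := mem_filter.1 hi
  have hnonneg : 0 ≤ f i / ℓ := div_nonneg (hf i his).1 hℓ.le
  constructor
  · exact (le_div_iff₀ hℓ).1 (Nat.floor_le hnonneg)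
  · linarith [(div_lt_iff₀ hℓ).1 (Nat.lt_floor_add_one (f i / ℓ))]

/-! ### Upper regular graphs -/

section Regularity

variable {V : Type*} [Fintype V] {G G' : SimpleGraph V} {p δ : ℝ}

lemma exists_sum_max_degIn_sub_eq (G : SimpleGraph V) (p : ℝ) (A : Finset V) :
    ∃ P : Finset V, ∑ x, max (degIn G A x - p * #A) 0 =
      #(G.interedges P A) - p * (#P * #A) := by
  refine ⟨({x | 0 ≤ degIn G A x - p * #A} : Finset V), ?_⟩
  rw [card_interedges_eq_sum_degIn]
  simp only [max_comm _ (0 : ℝ), max_def, ← sum_filter, sum_sub_distrib, sum_const, nsmul_eq_mul]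
  ring

/-- One-sided pseudorandomness of density `p`: no vertex has more than twice the expected degree,
and no vertex set of size at least `δ²pn` sends noticeably more than the expected number of edges to
any other set. Unlike two-sided notions it is inherited by subgraphs. -/
structure UpperRegular (G : SimpleGraph V) (p δ : ℝ) : Prop where
  degree_le (x : V) : (G.degree x : ℝ) ≤ 2 * p * Fintype.card V
  card_interedges_le (Y A : Finset V) (hY : δ ^ 2 * p * Fintype.card V ≤ #Y) :
    (#(G.interedges Y A) : ℝ) ≤ p * (#Y * #A) + δ * p * #Y * Fintype.card V

namespace UpperRegular

lemma mono (h : UpperRegular G p δ) (hle : G' ≤ G) : UpperRegular G' p δ where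
  degree_le x := (Nat.cast_le.2 (SimpleGraph.degree_le_of_le hle)).trans (h.degree_le x)
  card_interedges_le Y A hY := by
    refine le_trans (Nat.cast_le.2 (card_le_card ?_)) (h.card_interedges_le Y A hY)
    exact monotone_filter_right _ fun q _ hq => hle hq

variable (h : UpperRegular G p δ)
include h

lemma sum_max_degIn_sub_le_of_le_card {Y : Finset V} (hY : δ ^ 2 * p * Fintype.card V ≤ #Y) :
    ∑ x, max (degIn G Y x - p * #Y) 0 ≤ δ * p * #Y * Fintype.card V := by
  obtain ⟨P, hP⟩ := exists_sum_max_degIn_sub_eq G p Y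
  rw [hP, card_interedges_comm]
  linarith [h.card_interedges_le Y P hY]

lemma sum_max_degIn_sub_le (hp : 0 ≤ p) (hδ : 0 ≤ δ) (hδp : 2 * δ * p ≤ 1) (T : Finset V) :
    ∑ x, max (degIn G T x - p * #T) 0 ≤ δ * p * Fintype.card V ^ 2 := by
  obtain ⟨P, hP⟩ := exists_sum_max_degIn_sub_eq G p T
  rw [hP]
  set n : ℝ := (Fintype.card V : ℝ)
  rcases le_total (δ ^ 2 * p * n) #P with hlarge | hsmall
  · have hPn : (#P : ℝ) ≤ n := Nat.cast_le.2 (card_le_univ P)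
    have : δ * p * #P * n ≤ δ * p * n * n := by gcongr
    linarith [h.card_interedges_le P T hlarge]
  · have hdeg : (#(G.interedges P T) : ℝ) ≤ #P * (2 * p * n) := by
      rw [card_interedges_eq_sum_degIn, ← nsmul_eq_mul]
      exact sum_le_card_nsmul _ _ _ fun x _ => (degIn_le_degree G T x).trans (h.degree_le x)
    calc (#(G.interedges P T) : ℝ) - p * (#P * #T) ≤ #P * (2 * p * n) :=
          (sub_le_self _ (by positivity)).trans hdeg
      _ ≤ δ ^ 2 * p * n * (2 * p * n) := by gcongr
      _ = 2 * δ * p * (δ * p * n ^ 2) := by ring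
      _ ≤ δ * p * n ^ 2 := mul_le_of_le_one_left (by positivity) hδp

lemma sum_sum_neighborFinset_le {Y S : Finset V} (hY : δ ^ 2 * p * Fintype.card V ≤ #Y)
    (hS : ∀ y ∈ Y, G.neighborFinset y ⊆ S) {f : V → ℝ} {M : ℝ} (hf0 : ∀ x, 0 ≤ f x)
    (hfM : ∀ x, f x ≤ M) (hM : 0 ≤ M) :
    ∑ y ∈ Y, ∑ x ∈ G.neighborFinset y, f x ≤
      p * #Y * ∑ x ∈ S, f x + δ * p * #Y * Fintype.card V * M := by
  have hterm (x : V) :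
      degIn G Y x * f x ≤ p * #Y * f x + max (degIn G Y x - p * #Y) 0 * M := by
    have hpos := le_max_right (degIn G Y x - p * #Y) 0
    have hsub := le_max_left (degIn G Y x - p * #Y) 0
    linarith [mul_le_mul_of_nonneg_right hsub (hf0 x), mul_le_mul_of_nonneg_left (hfM x) hpos]
  calc ∑ y ∈ Y, ∑ x ∈ G.neighborFinset y, f x
      = ∑ x ∈ S, degIn G Y x * f x := by
        rw [sum_sum_neighborFinset]
        refine (sum_subset (subset_univ S) fun x _ hx => ?_).symm
        rw [degIn, card_eq_zero.2, Nat.cast_zero, zero_mul]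
        exact filter_eq_empty_iff.2 fun y hy hxy => hx (hS y hy (by simpa using hxy.symm))
    _ ≤ ∑ x ∈ S, (p * #Y * f x + max (degIn G Y x - p * #Y) 0 * M) :=
        sum_le_sum fun x _ => hterm x
    _ ≤ p * #Y * ∑ x ∈ S, f x + (∑ x, max (degIn G Y x - p * #Y) 0) * M := by
        rw [sum_add_distrib, ← mul_sum, ← sum_mul]
        gcongr
        exact subset_univ S
    _ ≤ p * #Y * ∑ x ∈ S, f x + δ * p * #Y * Fintype.card V * M := by
        gcongr
        exact h.sum_max_degIn_sub_le_of_le_card hY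

lemma sum_degree_le {Y S : Finset V} (hY : δ ^ 2 * p * Fintype.card V ≤ #Y)
    (hS : ∀ y ∈ Y, G.neighborFinset y ⊆ S) :
    ∑ y ∈ Y, (G.degree y : ℝ) ≤ p * #Y * (#S + δ * Fintype.card V) := by
  have hone := h.sum_sum_neighborFinset_le hY hS (f := 1) (M := 1) (by simp) (by simp) (by simp)
  simp only [Pi.one_apply, sum_const, G.card_neighborFinset_eq_degree, nsmul_eq_mul,
    mul_one] at hone
  linarith

lemma sum_sum_degree_le (hp : 0 ≤ p) (hδ : 0 ≤ δ) (hδp : 2 * δ * p ≤ 1) {Y S : Finset V}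
    (hY : δ ^ 2 * p * Fintype.card V ≤ #Y) (hS : ∀ y ∈ Y, G.neighborFinset y ⊆ S) :
    ∑ y ∈ Y, ∑ x ∈ G.neighborFinset y, (G.degree x : ℝ) ≤
      p * #Y * (#(G.interedges S S) + 3 * δ * p * Fintype.card V ^ 2) +
        p * #Sᶜ * ∑ y ∈ Y, (G.degree y : ℝ) := by
  set n : ℝ := (Fintype.card V : ℝ)
  -- Truncating at the expected value keeps `f` nonnegative, at the cost of a small total error.
  let g (x : V) : ℝ := max (degIn G Sᶜ x - p * #Sᶜ) 0
  let f (x : V) : ℝ := degIn G S x + g x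
  have hg (x) : g x ≤ degIn G Sᶜ x := max_le (sub_le_self _ (by positivity)) (degIn_nonneg G _ x)
  have hdegree (x) : (G.degree x : ℝ) ≤ f x + p * #Sᶜ := by
    have : degIn G Sᶜ x - p * #Sᶜ ≤ g x := le_max_left _ _
    linarith [degIn_add_degIn_compl G S x]
  have hf0 (x) : 0 ≤ f x := add_nonneg (degIn_nonneg G S x) (le_max_right _ _)
  have hfM (x) : f x ≤ 2 * p * n := by
    linarith [hg x, degIn_add_degIn_compl G S x, h.degree_le x]
  have hsumf : ∑ x ∈ S, f x ≤ #(G.interedges S S) + δ * p * n ^ 2 := by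
    rw [card_interedges_eq_sum_degIn, sum_add_distrib]
    gcongr
    exact (sum_le_sum_of_subset_of_nonneg (subset_univ S) fun _ _ _ => le_max_right _ _).trans
      (h.sum_max_degIn_sub_le hp hδ hδp Sᶜ)
  calc ∑ y ∈ Y, ∑ x ∈ G.neighborFinset y, (G.degree x : ℝ)
      ≤ ∑ y ∈ Y, ∑ x ∈ G.neighborFinset y, (f x + p * #Sᶜ) := by gcongr; exact hdegree _
    _ = ∑ y ∈ Y, ∑ x ∈ G.neighborFinset y, f x + p * #Sᶜ * ∑ y ∈ Y, (G.degree y : ℝ) := by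
        simp only [sum_add_distrib, sum_const, nsmul_eq_mul, G.card_neighborFinset_eq_degree,
          ← sum_mul]
        ring
    _ ≤ p * #Y * (#(G.interedges S S) + δ * p * n ^ 2) + δ * p * #Y * n * (2 * p * n) +
          p * #Sᶜ * ∑ y ∈ Y, (G.degree y : ℝ) := by
        gcongr
        exact (h.sum_sum_neighborFinset_le hY hS hf0 hfM (by positivity)).trans (by gcongr)
    _ = _ := by ring

lemma le_card_interedges_of_le_excess (hp : 0 < p) (hδ : 0 ≤ δ) (hδp : 2 * δ * p ≤ 1)
    {Y S : Finset V} (hY0 : Y.Nonempty) (hY : δ ^ 2 * p * Fintype.card V ≤ #Y)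
    (hS : ∀ y ∈ Y, G.neighborFinset y ⊆ S) {ξ D ℓ : ℝ} (hℓ : 0 ≤ ℓ)
    (hdeg : ∀ y ∈ Y, (G.degree y : ℝ) ∈ Set.Icc D (D + ℓ)) (hξ : ∀ y ∈ Y, ξ ≤ excess G p y) :
    ξ ≤ p * (#(G.interedges S S) + 2 * Fintype.card V * ℓ + 5 * δ * p * Fintype.card V ^ 2) := by
  have hwalks := h.sum_sum_degree_le hp.le hδ hδp hY hS
  have hsS := h.sum_degree_le hY hS
  set n : ℝ := (Fintype.card V : ℝ)
  set s : ℝ := ∑ y ∈ Y, (G.degree y : ℝ)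
  have hk : (0 : ℝ) < #Y := Nat.cast_pos.2 hY0.card_pos
  have hD : D ≤ p * (#S + δ * n) := by
    have hDs : #Y * D ≤ s := by
      rw [← nsmul_eq_mul]
      exact card_nsmul_le_sum _ _ _ fun y hy => (hdeg y hy).1
    exact le_of_mul_le_mul_left (by linarith) hk
  have hs : s ≤ #Y * (2 * p * n) := by
    rw [← nsmul_eq_mul]
    exact sum_le_card_nsmul _ _ _ fun y _ => h.degree_le y
  have hs0 : 0 ≤ s := sum_nonneg fun y _ => Nat.cast_nonneg _
  have hlower : #Y * ξ + (p * n - D - ℓ) * s ≤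
      ∑ y ∈ Y, ∑ x ∈ G.neighborFinset y, (G.degree x : ℝ) := by
    rw [mul_sum, ← nsmul_eq_mul, ← sum_const, ← sum_add_distrib]
    refine sum_le_sum fun y hy => ?_
    have hy_excess := hξ y hy
    rw [excess] at hy_excess
    have := mul_le_mul_of_nonneg_left (hdeg y hy).2 (Nat.cast_nonneg (α := ℝ) (G.degree y))
    linarith
  have hcompl : (#Sᶜ : ℝ) = n - #S := by
    rw [card_compl, Nat.cast_sub (card_le_univ S)]
  rw [hcompl] at hwalks
  have hsD : s * (D + ℓ - p * #S) ≤ #Y * (2 * p * n) * (ℓ + p * δ * n) :=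
    calc s * (D + ℓ - p * #S) ≤ s * (ℓ + p * δ * n) :=
          mul_le_mul_of_nonneg_left (by linarith) hs0
      _ ≤ #Y * (2 * p * n) * (ℓ + p * δ * n) := by gcongr
  exact le_of_mul_le_mul_left (by linarith) hk

end UpperRegular

end Regularity

/-! ### Second neighborhoods -/

section SecondNeighborhood

variable {V : Type} {G : SimpleGraph V} {w x y : V}

lemma mem_secondNbhd_of_adj_of_adj (hwy : G.Adj w y) (hyx : G.Adj y x) (hne : x ≠ w)
    (hnadj : ¬ G.Adj w x) : x ∈ secondNbhd G w := by
  have hle : G.dist w x ≤ 2 := by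
    simpa using SimpleGraph.dist_le (.cons hwy (.cons hyx .nil))
  have h0 : G.dist w x ≠ 0 := fun h =>
    hne ((hwy.reachable.trans hyx.reachable).dist_eq_zero_iff.1 h).symm
  have h1 : G.dist w x ≠ 1 := fun h => hnadj (SimpleGraph.dist_eq_one_iff_adj.1 h)
  rw [secondNbhd, Set.mem_ofPred_eq]
  omega

lemma card_interedges_self_le_two_mul_edgesInside [Finite V] {S : Finset V} {Z : Set V}
    (hSZ : (S : Set V) ⊆ Z) :
    #(G.interedges S S) ≤ 2 * edgesInside G Z := by
  have := Fintype.ofFinite V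
  rw [edgesInside, Set.ncard_eq_toFinset_card']
  refine card_le_mul_card_image_of_maps_to (f := fun q => s(q.1, q.2)) (fun q hq => ?_) 2
    fun e _ => card_filter_sym2_mk_eq_le_two _ e
  obtain ⟨h1, h2, hadj⟩ := G.mem_interedges_iff.1 hq
  simpa using ⟨hadj, hSZ h1, hSZ h2⟩

variable [Fintype V]

lemma card_interedges_self_le_add_sum_degree (G : SimpleGraph V) (S R : Finset V) :
    (#(G.interedges S S) : ℝ) ≤
      #(G.interedges (S \ R) (S \ R)) + 2 * ∑ x ∈ R, (G.degree x : ℝ) := by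
  have hsub : G.interedges S S ⊆
      G.interedges (S \ R) (S \ R) ∪ (G.interedges R univ ∪ G.interedges univ R) := by
    intro q hq
    simp only [mem_union, G.mem_interedges_iff, Finset.mem_sdiff, mem_univ] at hq ⊢
    tauto
  have hcard : #(G.interedges S S) ≤
      #(G.interedges (S \ R) (S \ R)) + (#(G.interedges R univ) + #(G.interedges univ R)) :=
    (card_le_card hsub).trans ((card_union_le _ _).trans (by gcongr; exact card_union_le _ _))
  rw [card_interedges_comm G univ R] at hcard
  simp only [← degIn_univ, ← card_interedges_eq_sum_degIn]
  have := Nat.cast_le (α := ℝ).2 hcard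
  push_cast at this
  linarith

lemma card_interedges_biUnion_neighborFinset_le {Y : Finset V} (hY : Y ⊆ G.neighborFinset w) :
    (#(G.interedges (Y.biUnion (G.neighborFinset ·)) (Y.biUnion (G.neighborFinset ·))) : ℝ) ≤
      2 * edgesInside G (secondNbhd G w) +
        2 * ∑ x ∈ insert w (G.neighborFinset w), (G.degree x : ℝ) := by
  set S := Y.biUnion (G.neighborFinset ·)
  set R := insert w (G.neighborFinset w)
  have hsecond : ((S \ R : Finset V) : Set V) ⊆ secondNbhd G w := by
    intro x hx
    obtain ⟨hxS, hxR⟩ := Finset.mem_sdiff.1 (mem_coe.1 hx)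
    obtain ⟨y, hy, hyx⟩ := mem_biUnion.1 hxS
    obtain ⟨hne, hnadj⟩ := not_or.1 (mt mem_insert.2 hxR)
    exact mem_secondNbhd_of_adj_of_adj (by simpa using hY hy) (by simpa using hyx) hne
      (by simpa using hnadj)
  refine (card_interedges_self_le_add_sum_degree G S R).trans ?_
  gcongr
  exact_mod_cast card_interedges_self_le_two_mul_edgesInside hsecond

end SecondNeighborhood

namespace UpperRegular

variable {V : Type*} [Fintype V] {G : SimpleGraph V} {p δ ε : ℝ}

lemma exists_subset_neighborFinset_le_excess (h : UpperRegular G p δ) (hδ0 : 0 < δ) (hδ1 : δ ≤ 1)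
    (hδε : 40 * δ ≤ ε) (hp : 0 < p) [Nonempty V]
    (hsum : (1 / 2 + ε) * (p * Fintype.card V ^ 2) ≤ ∑ x, (G.degree x : ℝ)) :
    ∃ w, ∃ Y ⊆ G.neighborFinset w, δ ^ 2 * p * Fintype.card V ≤ #Y ∧
      (∀ y ∈ Y, ε / 2 * p ^ 2 * Fintype.card V ^ 2 ≤ excess G p y) ∧
      ∃ D, ∀ y ∈ Y, (G.degree y : ℝ) ∈ Set.Icc D (D + 2 * δ * p * Fintype.card V) := by
  obtain ⟨w, hw⟩ := exists_le_degIn_filter_excess h.degree_le hp (by linarith) hsum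
  set n : ℝ := (Fintype.card V : ℝ)
  have hn : 0 < n := Nat.cast_pos.2 Fintype.card_pos
  set Y₀ : Finset V := {y ∈ ({y | ε / 2 * p ^ 2 * n ^ 2 ≤ excess G p y} : Finset V) | G.Adj w y}
  set m : ℕ := ⌈1 / δ⌉₊
  have hdeg (x) : (G.degree x : ℝ) ≤ m * (2 * δ * p * n) := by
    have hm : 1 ≤ m * δ := (div_le_iff₀ hδ0).1 (Nat.le_ceil _)
    linarith [h.degree_le x, mul_le_mul_of_nonneg_right hm (by positivity : 0 ≤ 2 * p * n)]
  obtain ⟨Y, hYY₀, D, hcard, hD⟩ := exists_subset_forall_mem_Icc Y₀ (fun y => (G.degree y : ℝ))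
    (by positivity : 0 < 2 * δ * p * n) m fun y _ => ⟨Nat.cast_nonneg _, hdeg y⟩
  refine ⟨w, Y, fun y hy => ?_, ?_, fun y hy => ?_, D, hD⟩
  · simpa using (mem_filter.1 (hYY₀ hy)).2
  · have hm_le : (m + 1 : ℝ) ≤ 3 / δ := by
      have : (m : ℝ) < 1 / δ + 1 := Nat.ceil_lt_add_one (by positivity)
      have : 1 ≤ 1 / δ := (one_le_div hδ0).2 hδ1
      linarith [show 3 / δ = 3 * (1 / δ) by ring]
    calc δ ^ 2 * p * n ≤ (ε / 6 * p * n) / (3 / δ) := by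
          rw [show ε / 6 * p * n / (3 / δ) = δ * p * n * (ε / 18) by field_simp; ring]
          rw [show δ ^ 2 * p * n = δ * p * n * δ by ring]
          gcongr
          linarith
      _ ≤ #Y₀ / (m + 1) := by gcongr; exact hw
      _ ≤ #Y := hcard
  · simpa using (mem_filter.1 (mem_filter.1 (hYY₀ hy)).1).2

end UpperRegular

lemma UpperRegular.exists_le_edgesInside_secondNbhd {V : Type} [Fintype V] {G : SimpleGraph V}
    {p δ ε : ℝ} (h : UpperRegular G p δ) (hδ0 : 0 < δ) (hδ1 : δ ≤ 1) (hδε : 40 * δ ≤ ε)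
    (hpδ : 2 * p ≤ δ) (hpn : 1 ≤ p * Fintype.card V)
    (hedges : (1 / 2 + ε) * (Fintype.card V ^ 2 * p / 2) < G.edgeSet.ncard) :
    ∃ w, ε / 16 * (Fintype.card V ^ 2 * p) ≤ edgesInside G (secondNbhd G w) := by
  have hp : 0 < p := pos_of_mul_pos_left (zero_lt_one.trans_le hpn) (Nat.cast_nonneg _)
  have : Nonempty V := by
    rw [← Fintype.card_pos_iff, Nat.pos_iff_ne_zero]
    intro hcard
    norm_num [hcard] at hpn
  have hsum : (1 / 2 + ε) * (p * Fintype.card V ^ 2) ≤ ∑ x, (G.degree x : ℝ) := by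
    have : ∑ x, (G.degree x : ℝ) = 2 * G.edgeSet.ncard := by
      rw [Set.ncard_eq_toFinset_card']
      exact_mod_cast G.sum_degrees_eq_twice_card_edges
    linarith
  obtain ⟨w, Y, hYw, hYcard, hYexcess, D, hD⟩ :=
    h.exists_subset_neighborFinset_le_excess hδ0 hδ1 hδε hp hsum
  set n : ℝ := (Fintype.card V : ℝ)
  have hY0 : Y.Nonempty := by
    rw [← card_pos, ← Nat.cast_pos (α := ℝ)]
    nlinarith [sq_nonneg δ]
  have hmany := h.le_card_interedges_of_le_excess hp hδ0.le (by nlinarith) hY0 hYcard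
    (fun y hy => subset_biUnion_of_mem (G.neighborFinset ·) hy) (by positivity) hD hYexcess
  have hfew : ∑ x ∈ insert w (G.neighborFinset w), (G.degree x : ℝ) ≤ 3 * δ * p * n ^ 2 :=
    calc ∑ x ∈ insert w (G.neighborFinset w), (G.degree x : ℝ)
        ≤ #(insert w (G.neighborFinset w)) * (2 * p * n) := by
          rw [← nsmul_eq_mul]
          exact sum_le_card_nsmul _ _ _ fun x _ => h.degree_le x
      _ ≤ 3 * p * n * (2 * p * n) := by
          gcongr
          have : (#(insert w (G.neighborFinset w)) : ℝ) ≤ G.degree w + 1 := by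
            exact_mod_cast card_insert_le w (G.neighborFinset w)
          linarith [h.degree_le w]
      _ = 2 * p * (3 * p * n ^ 2) := by ring
      _ ≤ δ * (3 * p * n ^ 2) := by gcongr
      _ = 3 * δ * p * n ^ 2 := by ring
  have hinside := card_interedges_biUnion_neighborFinset_le hYw
  refine ⟨w, le_of_mul_le_mul_left ?_ hp⟩
  have hδε' : 40 * δ * (p ^ 2 * n ^ 2) ≤ ε * (p ^ 2 * n ^ 2) := by gcongr
  linarith [mul_le_mul_of_nonneg_left hinside hp.le, mul_le_mul_of_nonneg_left hfew hp.le]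

/-! ### Upper regularity of the random graph -/

section Probability

variable (V : Type) [Fintype V] [DecidableEq V] {p δ : ℝ}

lemma gnpProb_exists_degree_gt_le (h0 : 0 ≤ p) (h1 : p ≤ 1) :
    gnpProb V p (fun G => ∃ x, 2 * p * Fintype.card V < (G.degree x : ℝ)) ≤
      Fintype.card V * Real.exp (-(p * Fintype.card V / 8)) := by
  set n : ℝ := (Fintype.card V : ℝ) with hn
  have hterm (x : V) : gnpProb V p (fun G => 2 * p * n < G.degree x) ≤ Real.exp (-(p * n / 8)) := by
    have hx := gnpProb_card_interedges_gt_le h0 h1 (θ := 1 / 4) (by norm_num) (by norm_num)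
      {x} univ (p * n)
    simp only [card_interedges_eq_sum_degIn, sum_singleton, degIn_univ, card_singleton, card_univ,
      ← hn, Nat.cast_one, one_mul, ← two_mul, ← mul_assoc] at hx
    exact hx.trans_eq (congrArg Real.exp (by ring))
  calc gnpProb V p (fun G => ∃ x, 2 * p * n < (G.degree x : ℝ))
      ≤ ∑ x : V, gnpProb V p (fun G => 2 * p * n < (G.degree x : ℝ)) := by
        simpa using gnpProb_exists_mem_le h0 h1 univ fun x G => 2 * p * n < (G.degree x : ℝ)
    _ ≤ n * Real.exp (-(p * n / 8)) := by
        simpa using sum_le_card_nsmul univ _ _ fun x _ => hterm x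

lemma gnpProb_exists_card_interedges_gt_le (h0 : 0 ≤ p) (h1 : p ≤ 1) (hδ0 : 0 ≤ δ) (hδ1 : δ ≤ 1) :
    gnpProb V p (fun G => ∃ Y A : Finset V, δ ^ 2 * p * Fintype.card V ≤ #Y ∧
        p * (#Y * #A) + δ * p * #Y * Fintype.card V < #(G.interedges Y A)) ≤
      4 ^ Fintype.card V * Real.exp (-(δ ^ 4 / 8 * (p * Fintype.card V) ^ 2)) := by
  set n : ℝ := (Fintype.card V : ℝ)
  set Q : Finset (Finset V × Finset V) := {q | δ ^ 2 * p * n ≤ #q.1}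
  have hterm (q) (hq : q ∈ Q) :
      gnpProb V p (fun G => p * (#q.1 * #q.2) + δ * p * #q.1 * n < #(G.interedges q.1 q.2)) ≤
        Real.exp (-(δ ^ 4 / 8 * (p * n) ^ 2)) := by
    refine (gnpProb_card_interedges_gt_le h0 h1 (θ := δ / 4) (by positivity) (by linarith)
      q.1 q.2 _).trans (Real.exp_le_exp.2 ?_)
    have hA : (#q.2 : ℝ) ≤ n := Nat.cast_le.2 (card_le_univ _)
    have hY : δ ^ 2 * p * n ≤ #q.1 := (mem_filter.1 hq).2
    calc 2 * p * (δ / 4) ^ 2 * (#q.1 * #q.2) - δ / 4 * (δ * p * #q.1 * n)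
        ≤ 2 * p * (δ / 4) ^ 2 * (#q.1 * n) - δ / 4 * (δ * p * #q.1 * n) := by gcongr
      _ = -(δ ^ 2 / 8 * p * n * #q.1) := by ring
      _ ≤ -(δ ^ 2 / 8 * p * n * (δ ^ 2 * p * n)) := by gcongr
      _ = -(δ ^ 4 / 8 * (p * n) ^ 2) := by ring
  have hcardQ : (#Q : ℝ) ≤ 4 ^ Fintype.card V := by
    have : #Q ≤ Fintype.card (Finset V × Finset V) := card_le_univ Q
    rw [Fintype.card_prod, Fintype.card_finset, ← mul_pow] at this
    exact_mod_cast this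
  calc _ ≤ ∑ q ∈ Q, gnpProb V p
          (fun G => p * (#q.1 * #q.2) + δ * p * #q.1 * n < #(G.interedges q.1 q.2)) := by
        refine le_trans (gnpProb_mono h0 h1 fun G hG => ?_) (gnpProb_exists_mem_le h0 h1 Q _)
        obtain ⟨Y, A, hY, hYA⟩ := hG
        exact ⟨(Y, A), mem_filter.2 ⟨mem_univ _, hY⟩, hYA⟩
    _ ≤ #Q * Real.exp (-(δ ^ 4 / 8 * (p * n) ^ 2)) := by
        rw [← nsmul_eq_mul]
        exact sum_le_card_nsmul _ _ _ hterm
    _ ≤ 4 ^ Fintype.card V * Real.exp (-(δ ^ 4 / 8 * (p * n) ^ 2)) := by gcongr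

lemma gnpProb_not_upperRegular_le (h0 : 0 ≤ p) (h1 : p ≤ 1) (hδ0 : 0 ≤ δ) (hδ1 : δ ≤ 1) :
    gnpProb V p (fun G => ¬ UpperRegular G p δ) ≤
      Fintype.card V * Real.exp (-(p * Fintype.card V / 8)) +
        4 ^ Fintype.card V * Real.exp (-(δ ^ 4 / 8 * (p * Fintype.card V) ^ 2)) := by
  refine le_trans ?_ (add_le_add (gnpProb_exists_degree_gt_le V h0 h1)
    (gnpProb_exists_card_interedges_gt_le V h0 h1 hδ0 hδ1))
  refine (gnpProb_mono h0 h1 fun G hG => ?_).trans (gnpProb_or_le h0 h1 _ _)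
  by_contra! h
  exact hG ⟨h.1, h.2⟩

lemma one_sub_le_gnpProb_exists_le_edgesInside_secondNbhd {ε : ℝ} (hδ0 : 0 < δ) (hδ1 : δ ≤ 1)
    (hδε : 40 * δ ≤ ε) (hpδ : 2 * p ≤ δ) (hpn : 1 ≤ p * Fintype.card V) :
    1 - (Fintype.card V * Real.exp (-(p * Fintype.card V / 8)) +
        4 ^ Fintype.card V * Real.exp (-(δ ^ 4 / 8 * (p * Fintype.card V) ^ 2))) ≤
      gnpProb V p (fun G => ∀ G' : SimpleGraph V, G' ≤ G →
        (1 / 2 + ε) * (Fintype.card V ^ 2 * p / 2) < G'.edgeSet.ncard →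
        ∃ w, ε / 16 * (Fintype.card V ^ 2 * p) ≤ edgesInside G' (secondNbhd G' w)) := by
  have h0 : 0 ≤ p := (pos_of_mul_pos_left (zero_lt_one.trans_le hpn) (Nat.cast_nonneg _)).le
  have h1 : p ≤ 1 := by linarith
  refine le_trans ?_ (gnpProb_mono h0 h1 fun G (hG : UpperRegular G p δ) G' hle hedges =>
    (hG.mono hle).exists_le_edgesInside_secondNbhd hδ0 hδ1 hδε hpδ hpn hedges)
  linarith [gnpProb_not_upperRegular_le V h0 h1 hδ0.le hδ1,
    gnpProb_add_gnpProb_not p fun G : SimpleGraph V => UpperRegular G p δ]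

end Probability

lemma tendsto_nat_mul_exp_neg_sqrt :
    Tendsto (fun n : ℕ => (n : ℝ) * Real.exp (-(√(n : ℝ) / 8))) atTop (𝓝 0) := by
  have hsqrt : Tendsto (fun n : ℕ => √(n : ℝ) / 8) atTop atTop :=
    (Real.tendsto_sqrt_atTop.comp tendsto_natCast_atTop_atTop).atTop_div_const (by norm_num)
  have hexp := ((Real.tendsto_pow_mul_exp_neg_atTop_nhds_zero 2).const_mul 64).comp hsqrt
  rw [mul_zero] at hexp
  refine hexp.congr fun n => ?_
  rw [Function.comp_apply, div_pow, Real.sq_sqrt (Nat.cast_nonneg n)]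
  ring

lemma tendsto_four_pow_mul_exp_neg :
    Tendsto (fun n : ℕ => (4 : ℝ) ^ n * Real.exp (-(2 * (n : ℝ)))) atTop (𝓝 0) := by
  have hlt : 4 * Real.exp (-2) < 1 := by
    have hexp : Real.exp 2 = Real.exp 1 * Real.exp 1 := by
      rw [← Real.exp_add]
      norm_num
    rw [Real.exp_neg, ← div_eq_mul_inv, div_lt_one (Real.exp_pos _), hexp]
    nlinarith [Real.exp_one_gt_d9]
  refine (tendsto_pow_atTop_nhds_zero_of_lt_one (by positivity) hlt).congr fun n => ?_
  rw [mul_pow, ← Real.exp_nat_mul]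
  congr 2
  ring

lemma mul_rpow_neg_half_mul_self (C : ℝ) {x : ℝ} (hx : 0 ≤ x) :
    C * x ^ (-(1/2) : ℝ) * x = C * √x := by
  rw [Real.rpow_neg hx, ← Real.sqrt_eq_rpow, mul_assoc, inv_mul_eq_div, Real.div_sqrt]

theorem special_vertex_general {ε : ℝ} (hε : 0 < ε) :
    ∃ C₀ c : ℝ, 0 < c ∧ ∀ p : ℕ → ℝ,
      (∀ᶠ n : ℕ in atTop, C₀ * (n : ℝ) ^ (-(1/2) : ℝ) ≤ p n) → (∀ᶠ n in atTop, p n ≤ c) →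
      Tendsto
        (fun n : ℕ =>
          gnpProb (Fin n) (p n) (fun G =>
            ∀ G' : SimpleGraph (Fin n), G' ≤ G →
              (1/2 + ε) * ((n : ℝ)^2 * p n / 2) < (G'.edgeSet.ncard : ℝ) →
              ∃ w : Fin n,
                ε / 16 * ((n : ℝ)^2 * p n) ≤ (edgesInside G' (secondNbhd G' w) : ℝ)))
        atTop (𝓝 1) := by
  obtain ⟨δ, hδ0, hδ1, hδε⟩ : ∃ δ : ℝ, 0 < δ ∧ δ ≤ 1 ∧ 40 * δ ≤ ε :=
    ⟨min 1 (ε / 40), by positivity, min_le_left _ _, by linarith [min_le_right 1 (ε / 40)]⟩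
  -- With `pn ≥ 4√n / δ²` the exponent `δ⁴(pn)² / 8` is at least `2n`, which beats the `4 ^ n` pairs
  -- of vertex sets in the union bound.
  refine ⟨4 / δ ^ 2, δ / 2, by positivity, fun p hlow hup => ?_⟩
  have hlim : Tendsto (fun n : ℕ => 1 - ((n : ℝ) * Real.exp (-(√(n : ℝ) / 8)) +
      (4 : ℝ) ^ n * Real.exp (-(2 * (n : ℝ))))) atTop (𝓝 1) := by
    simpa using (tendsto_nat_mul_exp_neg_sqrt.add tendsto_four_pow_mul_exp_neg).const_sub 1
  refine tendsto_of_tendsto_of_tendsto_of_le_of_le' hlim tendsto_const_nhds ?_ ?_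
  · filter_upwards [hlow, hup, eventually_ge_atTop 1] with n hCp hpc hn
    have hpn : 4 / δ ^ 2 * √n ≤ p n * n := by
      rw [← mul_rpow_neg_half_mul_self _ n.cast_nonneg]
      gcongr
    have hsqrt : 4 * √n ≤ δ ^ 2 * (p n * n) := by
      rwa [div_mul_eq_mul_div, div_le_iff₀' (by positivity)] at hpn
    have hδsq : 1 ≤ 4 / δ ^ 2 := (one_le_div (by positivity)).2 (by nlinarith)
    have hsqrt_le : √n ≤ p n * n := (le_mul_of_one_le_left (by positivity) hδsq).trans hpn
    have hone : 1 ≤ √n := Real.one_le_sqrt.2 (by exact_mod_cast hn)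
    have hsq : 2 * n ≤ δ ^ 4 / 8 * (p n * n) ^ 2 := by
      have := pow_le_pow_left₀ (by positivity) hsqrt 2
      rw [mul_pow, Real.sq_sqrt n.cast_nonneg] at this
      linarith
    have hlower := one_sub_le_gnpProb_exists_le_edgesInside_secondNbhd (Fin n) (p := p n) hδ0 hδ1
      hδε (by linarith) (by simpa using hone.trans hsqrt_le)
    simp only [Fintype.card_fin] at hlower
    exact le_trans (by gcongr) hlower
  · filter_upwards [hlow, hup] with n hCp hpc
    exact gnpProb_le_one (le_trans (by positivity) hCp) (by linarith) _

/-- For every ε ∈ (0, 1/16) there is C₀ such that for p = C·n^(-1/2) with C ≥ C₀, a.a.s.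
every subgraph G' of G(n,p) with more than (1/2 + ε)·n²p/2 edges contains a vertex w with
at least (ε/16)·n²p edges inside its second neighborhood. -/
theorem special_vertex (ε : ℝ) (hε : ε ∈ Set.Ioo (0 : ℝ) (1/16)) :
    ∃ C₀ : ℝ, ∀ C : ℝ, C₀ ≤ C →
      Filter.Tendsto
        (fun n : ℕ =>
          gnpProb (Fin n) (C * (n : ℝ) ^ (-(1/2) : ℝ)) (fun G =>
            ∀ G' : SimpleGraph (Fin n), G' ≤ G →
              (1/2 + ε) * ((n : ℝ)^2 * (C * (n : ℝ) ^ (-(1/2) : ℝ)) / 2) <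
                (G'.edgeSet.ncard : ℝ) →
              ∃ w : Fin n,
                ε / 16 * ((n : ℝ)^2 * (C * (n : ℝ) ^ (-(1/2) : ℝ))) ≤
                  (edgesInside G' (secondNbhd G' w) : ℝ)))
        Filter.atTop (nhds 1) := by
  obtain ⟨C₀, c, hc, h⟩ := special_vertex_general hε.1
  refine ⟨C₀, fun C hC => h _ (.of_forall fun n => by gcongr) ?_⟩
  have hp : Tendsto (fun n : ℕ => C * (n : ℝ) ^ (-(1/2) : ℝ)) atTop (𝓝 0) := by
    simpa using ((tendsto_rpow_neg_atTop (one_half_pos (α := ℝ))).comp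
      tendsto_natCast_atTop_atTop).const_mul C
  exact hp.eventually_le_const hc
end

section
/- For every i ∈ ℤ_n and every integer l with 2 ≤ l ≤ n − 2, if e₁ ∈ E_i and e₂ ∈ E_{i+l} are crossing edges of K_n ∖ C_n, then the graph C_n ∪ {e₁, e₂} contains a cycle of length l + 2 and a cycle of length n − l + 2. -/
/-!
Let `x₁, x₂, y₁, y₂` be the endpoints of the crossing chords `e₁ = {x₁, y₁}` and `e₂ = {x₂, y₂}` in
clockwise order, and let `a, b, c, d ≥ 1` be the consecutive arcs between them, `a + b + c + d = n`.
Subtracting directions gives `l ≡ (x₂ - x₁) + (y₂ - y₁) = a + c (mod n)`, and as both sides lie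
strictly between `0` and `n`, `l = a + c`. The disjoint arcs from `x₁` to `x₂` and from `y₁` to `y₂`
are joined by the two chords into a cycle of length `a + c + 2 = l + 2`. The other two arcs, which
are those of the rotated quadruple `x₂, y₁, y₂, x₁`, give length `b + d + 2 = n - l + 2`.
-/

open Filter Topology Classical

/-- The clockwise arc length from `a` to `b` on the discrete circle `ZMod n`. -/
def arcDist {n : ℕ} (a b : ZMod n) : ℕ := (b - a).val

/-- The points of `L` are all distinct and lie in this clockwise cyclic order
on the discrete circle `ZMod n` (the consecutive clockwise arcs, including the
wrap-around arc, sum to exactly `n`). -/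
def InClockwiseOrder {n : ℕ} (L : List (ZMod n)) : Prop :=
  L.Nodup ∧ ((L.zip (L.rotate 1)).map fun q => arcDist q.1 q.2).sum = n

/-- The Hamilton cycle `C_n` on vertex set `ZMod n`, with edges `{i, i+1}`. -/
def cycleGraph (n : ℕ) : SimpleGraph (ZMod n) :=
  SimpleGraph.fromEdgeSet {e | ∃ i : ZMod n, e = s(i, i + 1)}

/-- `G` contains a cycle of length `t`. -/
def HasCycleLength {V : Type} (G : SimpleGraph V) (t : ℕ) : Prop :=
  ∃ (v : V) (w : G.Walk v v), w.IsCycle ∧ w.length = t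

/-- `‖k‖`: the distance of `k` from `0` on the discrete circle `ZMod n`. -/
def circNorm {n : ℕ} (k : ZMod n) : ℕ := min k.val (-k).val

/-- `E_i`: the edges of `K_n` in direction `i`, i.e. pairs `{x,y}` with `x + y = i`. -/
def dirEdges (n : ℕ) (i : ZMod n) : Set (Sym2 (ZMod n)) :=
  {e | ∃ x y : ZMod n, e = s(x, y) ∧ x ≠ y ∧ x + y = i}

/-- Two edges are crossing if their four endpoints are all distinct and lie
alternately on the cycle `C_n`. -/
def Crossing {n : ℕ} (e₁ e₂ : Sym2 (ZMod n)) : Prop :=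
  ∃ x₁ y₁ x₂ y₂ : ZMod n, e₁ = s(x₁, y₁) ∧ e₂ = s(x₂, y₂) ∧
    InClockwiseOrder [x₁, x₂, y₁, y₂]

/-- A crossing is close if some pair of endpoints of the two edges is at circular
distance at most `βn`. -/
def CloseCrossing {n : ℕ} (β : ℝ) (e₁ e₂ : Sym2 (ZMod n)) : Prop :=
  Crossing e₁ e₂ ∧ ∃ a b : ZMod n, a ∈ e₁ ∧ b ∈ e₂ ∧ (circNorm (a - b) : ℝ) ≤ β * n

/-- The centre point `i/2` (for odd `i.val` the floor `⌊i/2⌋`) of the direction `i`. -/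
def dirCenter (n : ℕ) (i : ZMod n) : ZMod n := ((i.val / 2 : ℕ) : ZMod n)

/-- The distance of an edge from the centre point of its direction; within `E_i` this
realises the linear order `≤_i`. -/
def edgeRank (n : ℕ) (i : ZMod n) (e : Sym2 (ZMod n)) : ℕ :=
  Sym2.lift ⟨fun x y => min (circNorm (x - dirCenter n i)) (circNorm (y - dirCenter n i)),
    fun _ _ => min_comm _ _⟩ e

/-- The (1-indexed) position of an edge of `E_i` in the order `≤_i`. -/
noncomputable def edgePos (n : ℕ) (i : ZMod n) (e : Sym2 (ZMod n)) : ℕ :=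
  {e' ∈ dirEdges n i | edgeRank n i e' ≤ edgeRank n i e}.ncard

/-- `E_i^k`: the interval of `⌊βn⌋` consecutive edges of `(E_i, ≤_i)` starting from the
`k`-th smallest. -/
noncomputable def dirInterval (n : ℕ) (i : ZMod n) (β : ℝ) (k : ℕ) :
    Set (Sym2 (ZMod n)) :=
  {e ∈ dirEdges n i | k ≤ edgePos n i e ∧ edgePos n i e < k + ⌊β * n⌋₊}

/-- `M_i`: `E_i` without its leftmost and rightmost subintervals of length `⌊βn⌋`. -/
noncomputable def dirMiddle (n : ℕ) (i : ZMod n) (β : ℝ) : Set (Sym2 (ZMod n)) :=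
  {e ∈ dirEdges n i | ⌊β * n⌋₊ < edgePos n i e ∧
    edgePos n i e ≤ (dirEdges n i).ncard - ⌊β * n⌋₊}

/-- The direction `E_i` is `(β, ε', p)`-good in `G`. -/
def DirGood (n : ℕ) (β ε' p : ℝ) (G : SimpleGraph (ZMod n)) (i : ZMod n) : Prop :=
  (∀ k : ℕ, 1 ≤ k → (k : ℝ) ≤ (1/2 - β) * n →
    |((G.edgeSet ∩ dirInterval n i β k).ncard : ℝ) - β * n * p| ≤ ε' * (β * n * p)) ∧
  |((G.edgeSet ∩ dirMiddle n i β).ncard : ℝ) - (1/2 - 2*β) * n * p| ≤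
    ε' * ((1/2 - 2*β) * n * p)

section Walks

variable {V : Type*} {G : SimpleGraph V} {u v u' v' : V} {p : G.Walk u v} {q : G.Walk u' v'}

lemma isPath_append_cons_reverse (hp : p.IsPath) (hq : q.IsPath)
    (hpq : p.support.Disjoint q.support) (h : G.Adj v v') :
    (p.append (.cons h q.reverse)).IsPath := by
  rw [SimpleGraph.Walk.isPath_def, SimpleGraph.Walk.support_append,
    SimpleGraph.Walk.support_cons, List.tail_cons, SimpleGraph.Walk.support_reverse]
  exact hp.support_nodup.append (List.nodup_reverse.mpr hq.support_nodup)
    (List.disjoint_reverse_right.mpr hpq)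

lemma isCycle_cons_append_cons_reverse (hp : p.IsPath) (hq : q.IsPath)
    (hpq : p.support.Disjoint q.support) (hlen : 0 < p.length + q.length)
    (h : G.Adj v v') (h' : G.Adj u' u) :
    (SimpleGraph.Walk.cons h' (p.append (.cons h q.reverse))).IsCycle := by
  have hpath := isPath_append_cons_reverse hp hq hpq h
  refine (SimpleGraph.Walk.cons_isCycle_iff _ _).mpr ⟨hpath, fun hedge => ?_⟩
  have hone := hpath.length_eq_one_of_mem_edges (Sym2.eq_swap ▸ hedge)
  rw [SimpleGraph.Walk.length_append, SimpleGraph.Walk.length_cons,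
    SimpleGraph.Walk.length_reverse] at hone
  omega

end Walks

section Arcs

variable {n : ℕ} {x y : ZMod n}

/-- The closed clockwise arc from `x` to `y` on the discrete circle `ZMod n`: the points met when
walking clockwise from `x` until `y` is reached. -/
def clockwiseArc (x y : ZMod n) : Set (ZMod n) :=
  {z | arcDist x z ≤ arcDist x y}

lemma arcDist_pos : 0 < arcDist x y ↔ x ≠ y := by
  rw [arcDist, ZMod.val_pos, sub_ne_zero, ne_comm]

lemma arcDist_eq_of_natCast_eq {k : ℕ} (hk : k < n) (h : (k : ZMod n) = y - x) :
    arcDist x y = k := by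
  rw [arcDist, ← h, ZMod.val_natCast_of_lt hk]

variable [NeZero n]

lemma natCast_arcDist (x y : ZMod n) : (arcDist x y : ZMod n) = y - x :=
  ZMod.natCast_zmod_val _

lemma arcDist_lt (x y : ZMod n) : arcDist x y < n :=
  ZMod.val_lt _

lemma arcDist_sub_one {k : ℕ} (h : arcDist x y = k + 1) : arcDist x (y - 1) = k := by
  have hlt := arcDist_lt x y
  refine arcDist_eq_of_natCast_eq (by omega) ?_
  have hcast : ((k + 1 : ℕ) : ZMod n) = y - x := by rw [← h, natCast_arcDist]
  push_cast at hcast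
  linear_combination hcast

lemma exists_isPath_clockwiseArc {G : SimpleGraph (ZMod n)} (hG : cycleGraph n ≤ G)
    (x y : ZMod n) :
    ∃ p : G.Walk x y,
      p.IsPath ∧ p.length = arcDist x y ∧ ∀ z ∈ p.support, z ∈ clockwiseArc x y := by
  induction hk : arcDist x y generalizing y with
  | zero =>
    obtain rfl : x = y := by
      by_contra hxy
      exact (arcDist_pos.mpr hxy).ne' hk
    exact ⟨.nil, .nil, rfl, by simp [clockwiseArc]⟩
  | succ k ih =>
    have hpred : arcDist x (y - 1) = k := arcDist_sub_one hk
    obtain ⟨p, hp, hlen, hsupp⟩ := ih (y - 1) hpred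
    have hne : y - 1 ≠ y := fun h => by rw [h] at hpred; omega
    have hadj : G.Adj (y - 1) y :=
      hG ((SimpleGraph.fromEdgeSet_adj _).mpr ⟨⟨y - 1, by rw [sub_add_cancel]⟩, hne⟩)
    simp only [clockwiseArc, Set.mem_ofPred_eq, hpred, hk] at hsupp ⊢
    refine ⟨p.concat hadj, hp.concat (fun hy => ?_) hadj, by simp [hlen], fun z hz => ?_⟩
    · have := hsupp y hy
      omega
    · rw [SimpleGraph.Walk.support_concat, List.mem_append, List.mem_singleton] at hz
      rcases hz with hz | rfl
      · exact (hsupp z hz).trans k.le_succ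
      · exact hk.le

end Arcs

namespace InClockwiseOrder

variable {n : ℕ}

lemma rotate {L : List (ZMod n)} (h : InClockwiseOrder L) (k : ℕ) :
    InClockwiseOrder (L.rotate k) := by
  refine ⟨List.nodup_rotate.mpr h.1, ?_⟩
  have hzip : (L.rotate k).zip ((L.rotate k).rotate 1) = (L.zip (L.rotate 1)).rotate k := by
    rw [List.rotate_rotate, add_comm, ← List.rotate_rotate]
    exact (List.zipWith_rotate_distrib _ _ _ _ (List.length_rotate _ _).symm).symm
  rw [hzip, List.map_rotate, (List.rotate_perm _ k).sum_eq, h.2]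

variable {x₁ x₂ y₁ y₂ : ZMod n}

lemma sum_arcDist_four (h : InClockwiseOrder [x₁, x₂, y₁, y₂]) :
    arcDist x₁ x₂ + arcDist x₂ y₁ + arcDist y₁ y₂ + arcDist y₂ x₁ = n := by
  simpa [add_assoc] using h.2

lemma arcDist_pos_four (h : InClockwiseOrder [x₁, x₂, y₁, y₂]) :
    0 < arcDist x₁ x₂ ∧ 0 < arcDist x₂ y₁ ∧ 0 < arcDist y₁ y₂ ∧ 0 < arcDist y₂ x₁ := by
  have hnodup := h.1
  simp only [List.nodup_cons, List.mem_cons, List.not_mem_nil, or_false, not_or] at hnodup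
  simp only [arcDist_pos]
  tauto

variable [NeZero n]

lemma disjoint_clockwiseArc (h : InClockwiseOrder [x₁, x₂, y₁, y₂]) :
    Disjoint (clockwiseArc x₁ x₂) (clockwiseArc y₁ y₂) := by
  refine Set.disjoint_left.mpr fun z (hx : arcDist x₁ z ≤ _) (hy : arcDist y₁ z ≤ _) => ?_
  have hsum := h.sum_arcDist_four
  obtain ⟨-, hgap, -, hgap'⟩ := h.arcDist_pos_four
  have hz : arcDist x₁ z = arcDist x₁ x₂ + arcDist x₂ y₁ + arcDist y₁ z :=
    arcDist_eq_of_natCast_eq (by omega) (by push_cast [natCast_arcDist]; ring)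
  omega

lemma arcDist_add_arcDist_eq (h : InClockwiseOrder [x₁, x₂, y₁, y₂]) {l : ℕ} (hl : l < n)
    (hdir : x₂ + y₂ = x₁ + y₁ + l) : arcDist x₁ x₂ + arcDist y₁ y₂ = l := by
  have hsum := h.sum_arcDist_four
  obtain ⟨-, hgap, -, -⟩ := h.arcDist_pos_four
  refine CharP.natCast_injOn_Iio (ZMod n) n (Set.mem_Iio.mpr (by omega)) hl ?_
  push_cast [natCast_arcDist]
  linear_combination hdir

lemma hasCycleLength {G : SimpleGraph (ZMod n)} (hG : cycleGraph n ≤ G)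
    (h : InClockwiseOrder [x₁, x₂, y₁, y₂]) (h₁ : G.Adj x₁ y₁) (h₂ : G.Adj x₂ y₂) :
    HasCycleLength G (arcDist x₁ x₂ + arcDist y₁ y₂ + 2) := by
  obtain ⟨p, hp, hplen, hpsupp⟩ := exists_isPath_clockwiseArc hG x₁ x₂
  obtain ⟨q, hq, hqlen, hqsupp⟩ := exists_isPath_clockwiseArc hG y₁ y₂
  have hpq : p.support.Disjoint q.support := fun z hzp hzq =>
    h.disjoint_clockwiseArc.notMem_of_mem_left (hpsupp z hzp) (hqsupp z hzq)
  have hlen : 0 < p.length + q.length := by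
    rw [hplen]
    exact Nat.add_pos_left h.arcDist_pos_four.1 _
  refine ⟨y₁, _, isCycle_cons_append_cons_reverse hp hq hpq hlen h₂ h₁.symm, ?_⟩
  simp only [SimpleGraph.Walk.length_cons, SimpleGraph.Walk.length_append,
    SimpleGraph.Walk.length_reverse, hplen, hqlen, add_assoc, Nat.reduceAdd]

end InClockwiseOrder

lemma mk_mem_dirEdges {n : ℕ} {i x y : ZMod n} :
    s(x, y) ∈ dirEdges n i ↔ x ≠ y ∧ x + y = i := by
  refine ⟨?_, fun ⟨hne, hsum⟩ => ⟨x, y, rfl, hne, hsum⟩⟩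
  rintro ⟨u, v, he, hne, rfl⟩
  rcases Sym2.eq_iff.mp he with ⟨rfl, rfl⟩ | ⟨rfl, rfl⟩
  · exact ⟨hne, rfl⟩
  · exact ⟨hne.symm, add_comm _ _⟩

/-- If `e₁ ∈ E_i` and `e₂ ∈ E_{i+l}` (with `2 ≤ l ≤ n−2`) are crossing edges of
`K_n ∖ C_n`, then `C_n ∪ {e₁, e₂}` contains cycles of lengths `l + 2` and `n − l + 2`. -/
theorem crossing_gives_cycles (n : ℕ) (i : ZMod n) (l : ℕ) (hl2 : 2 ≤ l) (hln : l ≤ n - 2)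
    (e₁ e₂ : Sym2 (ZMod n))
    (he₁ : e₁ ∈ dirEdges n i) (he₂ : e₂ ∈ dirEdges n (i + (l : ZMod n)))
    (hc₁ : e₁ ∉ (cycleGraph n).edgeSet) (hc₂ : e₂ ∉ (cycleGraph n).edgeSet)
    (hcross : Crossing e₁ e₂) :
    HasCycleLength (cycleGraph n ⊔ SimpleGraph.fromEdgeSet {e₁, e₂}) (l + 2) ∧
    HasCycleLength (cycleGraph n ⊔ SimpleGraph.fromEdgeSet {e₁, e₂}) (n - l + 2) := by
  have : NeZero n := ⟨by omega⟩
  obtain ⟨x₁, y₁, x₂, y₂, rfl, rfl, hord⟩ := hcross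
  obtain ⟨hne₁, hdir₁⟩ := mk_mem_dirEdges.mp he₁
  obtain ⟨hne₂, hdir₂⟩ := mk_mem_dirEdges.mp he₂
  set G := cycleGraph n ⊔ SimpleGraph.fromEdgeSet {s(x₁, y₁), s(x₂, y₂)}
  have hG : cycleGraph n ≤ G := le_sup_left
  have h₁ : G.Adj x₁ y₁ := Or.inr ((SimpleGraph.fromEdgeSet_adj _).mpr ⟨Or.inl rfl, hne₁⟩)
  have h₂ : G.Adj x₂ y₂ := Or.inr ((SimpleGraph.fromEdgeSet_adj _).mpr ⟨Or.inr rfl, hne₂⟩)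
  have hl : arcDist x₁ x₂ + arcDist y₁ y₂ = l :=
    hord.arcDist_add_arcDist_eq (by omega) (by rw [hdir₁, hdir₂])
  have hnl : arcDist x₂ y₁ + arcDist y₂ x₁ = n - l := by
    have hsum := hord.sum_arcDist_four
    omega
  exact ⟨hl ▸ hord.hasCycleLength hG h₁ h₂, hnl ▸ (hord.rotate 1).hasCycleLength hG h₂ h₁.symm⟩
end
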